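/- Let R be a ring, N a right R-module, Ω a nonempty set, and M = ∏_{i ∈ Ω} N the direct product of copies of N indexed by Ω. Then End_R(M) is a commutator ring if and only if either Ω is infinite or End_R(N) is a commutator ring. -/

import Mathlib

/-- `a` is a (finite) sum of additive commutators `x*y - y*x` of elements of the ring. -/
def IsSumOfCommutators {A : Type*} [Ring A] (a : A) : Prop :=
  ∃ (n : ℕ) (x y : Fin n → A), a = ∑ i, (x i * y i - y i * x i)

theorem isc_zero {A : Type*} [Ring A] : IsSumOfCommutators (0 : A) :=
  ⟨0, Fin.elim0, Fin.elim0, by simp⟩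

theorem isc_comm {A : Type*} [Ring A] (x y : A) : IsSumOfCommutators (x * y - y * x) :=
  ⟨1, fun _ => x, fun _ => y, by simp⟩

theorem isc_add {A : Type*} [Ring A] {a b : A} (ha : IsSumOfCommutators a)
    (hb : IsSumOfCommutators b) : IsSumOfCommutators (a + b) := by
  obtain ⟨n, x, y, rfl⟩ := ha
  obtain ⟨m, z, w, rfl⟩ := hb
  exact ⟨n + m, Fin.append x z, Fin.append y w, by simp only [Fin.sum_univ_add, Fin.append_left, Fin.append_right]⟩

theorem isc_sum {A ι : Type*} [Ring A] (s : Finset ι) (f : ι → A)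
    (h : ∀ i ∈ s, IsSumOfCommutators (f i)) : IsSumOfCommutators (∑ i ∈ s, f i) :=
  Finset.sum_induction f IsSumOfCommutators (fun _ _ => isc_add) isc_zero h

theorem isc_map {A B : Type*} [Ring A] [Ring B] (f : A →+* B) {a : A}
    (h : IsSumOfCommutators a) : IsSumOfCommutators (f a) := by
  obtain ⟨n, x, y, rfl⟩ := h
  exact ⟨n, fun i => f (x i), fun i => f (y i), by simp⟩

theorem isc_equiv {A B : Type*} [Ring A] [Ring B] (f : A ≃+* B)
    (h : ∀ a : A, IsSumOfCommutators a) (b : B) : IsSumOfCommutators b := by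
  have := isc_map f.toRingHom (h (f.symm b))
  simpa using this

theorem isc_trace {A n : Type*} [Ring A] [Fintype n] [DecidableEq n] {M : Matrix n n A}
    (h : IsSumOfCommutators M) : IsSumOfCommutators M.trace := by
  obtain ⟨k, x, y, rfl⟩ := h
  rw [Matrix.trace_sum]
  refine isc_sum _ _ fun i _ => ?_
  have : (x i * y i - y i * x i).trace
      = ∑ a, ∑ b, (x i a b * y i b a - y i b a * x i a b) := by
    rw [Matrix.trace_sub]
    simp only [Matrix.trace, Matrix.diag, Matrix.mul_apply, Finset.sum_sub_distrib]
    congr 1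
    exact Finset.sum_comm
  rw [this]
  exact isc_sum _ _ fun a _ => isc_sum _ _ fun b _ => isc_comm _ _

theorem isc_matrix {A n : Type*} [Ring A] [Fintype n] [DecidableEq n]
    (h : ∀ a : A, IsSumOfCommutators a) (M : Matrix n n A) : IsSumOfCommutators M := by
  rw [Matrix.matrix_eq_sum_single M]
  refine isc_sum _ _ fun i _ => isc_sum _ _ fun j _ => ?_
  by_cases hij : i = j
  · subst hij
    obtain ⟨k, x, y, hxy⟩ := h (M i i)
    refine ⟨k, fun t => Matrix.single i i (x t), fun t => Matrix.single i i (y t), ?_⟩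
    rw [hxy]
    simp only [Matrix.single_mul_single_same]
    ext a b
    simp only [Matrix.sum_apply, Matrix.sub_apply, Matrix.single_apply]
    split_ifs <;> simp
  · have : Matrix.single i j (M i j) = Matrix.single i j (M i j) * Matrix.single j j 1
        - Matrix.single j j 1 * Matrix.single i j (M i j) := by
      rw [Matrix.single_mul_single_same, Matrix.single_mul_single_of_ne _ _ _ _ (Ne.symm hij)]
      simp
    rw [this]
    exact isc_comm _ _

/-- right shift -/
def shiftR (S N Ω : Type*) [Ring S] [AddCommGroup N] [Module S N] :
    Module.End S (Ω × ℕ → N) where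
  toFun x p := match p with
    | (_, 0) => 0
    | (w, k + 1) => x (w, k)
  map_add' x y := by
    ext ⟨w, k⟩
    cases k <;> simp
  map_smul' c x := by
    ext ⟨w, k⟩
    cases k <;> simp

/-- left shift by `n` -/
def shiftL (S N Ω : Type*) [Ring S] [AddCommGroup N] [Module S N] (n : ℕ) :
    Module.End S (Ω × ℕ → N) :=
  LinearMap.funLeft S N (fun p : Ω × ℕ => (p.1, p.2 + n))

/-- the sum of `S^n φ T^(n+1)` -/
def bigX {S N Ω : Type*} [Ring S] [AddCommGroup N] [Module S N]
    (φ : Module.End S (Ω × ℕ → N)) : Module.End S (Ω × ℕ → N) where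
  toFun x p := ∑ n ∈ Finset.range (p.2 + 1), φ (shiftL S N Ω (n + 1) x) (p.1, p.2 - n)
  map_add' x y := by
    ext p
    simp [Finset.sum_add_distrib]
  map_smul' c x := by
    ext p
    simp [Finset.smul_sum]

theorem shiftL_shiftR {S N Ω : Type*} [Ring S] [AddCommGroup N] [Module S N] (n : ℕ)
    (x : Ω × ℕ → N) : shiftL S N Ω (n + 1) (shiftR S N Ω x) = shiftL S N Ω n x := by
  ext ⟨w, k⟩
  rfl

theorem shiftL_zero {S N Ω : Type*} [Ring S] [AddCommGroup N] [Module S N]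
    (x : Ω × ℕ → N) : shiftL S N Ω 0 x = x := by
  ext ⟨w, k⟩
  rfl

theorem bigX_comm {S N Ω : Type*} [Ring S] [AddCommGroup N] [Module S N]
    (φ : Module.End S (Ω × ℕ → N)) :
    φ = bigX φ * shiftR S N Ω - shiftR S N Ω * bigX φ := by
  refine LinearMap.ext fun x => funext fun ⟨w, k⟩ => ?_
  have h1 : (bigX φ * shiftR S N Ω) x (w, k)
      = ∑ n ∈ Finset.range (k + 1), φ (shiftL S N Ω n x) (w, k - n) := by
    change ∑ n ∈ Finset.range (k + 1),
      φ (shiftL S N Ω (n + 1) (shiftR S N Ω x)) (w, k - n) = _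
    simp only [shiftL_shiftR]
  rw [LinearMap.sub_apply, Pi.sub_apply, h1, Finset.sum_range_succ', shiftL_zero]
  cases k with
  | zero =>
    change _ = _ - (0 : N)
    simp
  | succ k =>
    change _ = _ - ∑ n ∈ Finset.range (k + 1), φ (shiftL S N Ω (n + 1) x) (w, k - n)
    simp

theorem stmt_9 {R : Type*} [Ring R] (N : Type*) [AddCommGroup N] [Module Rᵐᵒᵖ N]
    (Ω : Type*) [Nonempty Ω] :
    (∀ φ : Module.End Rᵐᵒᵖ (Ω → N), IsSumOfCommutators φ) ↔
      (Infinite Ω ∨ ∀ φ : Module.End Rᵐᵒᵖ N, IsSumOfCommutators φ) := by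
  classical
  rcases finite_or_infinite Ω with hΩ | hΩ
  · have := Fintype.ofFinite Ω
    let e := endVecRingEquivMatrixEnd Ω Rᵐᵒᵖ N
    constructor
    · intro h
      right
      intro φ
      obtain ⟨i⟩ := ‹Nonempty Ω›
      have := isc_trace (isc_equiv e h (Matrix.single i i φ))
      simpa using this
    · rintro (h | h)
      · exact absurd hΩ (not_finite_iff_infinite.mpr h)
      · exact isc_equiv e.symm (isc_matrix h)
  · refine ⟨fun _ => Or.inl hΩ, fun _ => ?_⟩
    have hc : Nonempty (Ω ≃ Ω × ℕ) := by
      rw [← Cardinal.lift_mk_eq']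
      simp [Cardinal.mul_aleph0_eq]
    obtain ⟨f⟩ := hc
    let l : (Ω × ℕ → N) ≃ₗ[Rᵐᵒᵖ] (Ω → N) := LinearEquiv.funCongrLeft Rᵐᵒᵖ N f
    refine isc_equiv l.conjRingEquiv fun φ => ?_
    rw [bigX_comm φ]
    exact isc_comm _ _
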